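/- arXiv:1202.0472 — 5 statements merged into one kernel-verified Lean document; each statement's English description precedes it below -/
import Mathlib

section
/- Let X ⊂ ℝⁿ, α ∈ (0,∞), p ∈ [2α,∞) and x ∈ ℝⁿ with positive lower α-density Θ_*^α(X,x) > 0. If I_p^α(X) < ∞, then X has a weak approximate α-tangent at x. -/
open MeasureTheory Metric Set Filter
open scoped ENNReal Topology Classical

noncomputable section

/-- The affine line through `x` and `y`. -/
def lineThrough {n : ℕ} (x y : EuclideanSpace ℝ (Fin n)) : Set (EuclideanSpace ℝ (Fin n)) :=
  {p | ∃ t : ℝ, p = x + t • (y - x)}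

/-- The inverse circumradius `κ(x,y,z)` of a triple of points, set to `0` when the
points are not pairwise distinct. -/
def kappa {n : ℕ} (x y z : EuclideanSpace ℝ (Fin n)) : ℝ≥0∞ :=
  if x ≠ y ∧ y ≠ z ∧ x ≠ z then
    ENNReal.ofReal (2 * Metric.infDist z (lineThrough x y) / (‖x - z‖ * ‖y - z‖))
  else 0

/-- `κ_G(x) = sup_{v,w ∈ X} κ(x,v,w)`. -/
def kappaG {n : ℕ} (X : Set (EuclideanSpace ℝ (Fin n))) (x : EuclideanSpace ℝ (Fin n)) : ℝ≥0∞ :=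
  ⨆ v ∈ X, ⨆ w ∈ X, kappa x v w

/-- `κ_i(x,y) = sup_{z ∈ X} κ(x,y,z)`. -/
def kappaI {n : ℕ} (X : Set (EuclideanSpace ℝ (Fin n))) (x y : EuclideanSpace ℝ (Fin n)) : ℝ≥0∞ :=
  ⨆ z ∈ X, kappa x y z

/-- The energy `U_p^α(X) = ∫_X κ_G(x)^p dH^α(x)`. -/
def energyU {n : ℕ} (p α : ℝ) (X : Set (EuclideanSpace ℝ (Fin n))) : ℝ≥0∞ :=
  ∫⁻ x in X, kappaG X x ^ p ∂ μH[α]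

/-- The energy `I_p^α(X) = ∫_X ∫_X κ_i(x,y)^p dH^α(x) dH^α(y)`. -/
def energyI {n : ℕ} (p α : ℝ) (X : Set (EuclideanSpace ℝ (Fin n))) : ℝ≥0∞ :=
  ∫⁻ y in X, ∫⁻ x in X, kappaI X x y ^ p ∂ μH[α] ∂ μH[α]

/-- The integral Menger curvature `M_p^α(X)`. -/
def energyM {n : ℕ} (p α : ℝ) (X : Set (EuclideanSpace ℝ (Fin n))) : ℝ≥0∞ :=
  ∫⁻ z in X, ∫⁻ y in X, ∫⁻ x in X, kappa x y z ^ p ∂ μH[α] ∂ μH[α] ∂ μH[α]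

/-- The open double cone about `x` in direction `s` with opening angle `ε`. -/
def cone {n : ℕ} (s : EuclideanSpace ℝ (Fin n)) (ε : ℝ) (x : EuclideanSpace ℝ (Fin n)) :
    Set (EuclideanSpace ℝ (Fin n)) :=
  {y | y ≠ x ∧
    min (InnerProductGeometry.angle (y - x) s) (InnerProductGeometry.angle (y - x) (-s)) < ε}

/-- `X` has an approximate `α`-tangent at `x`. -/
def HasApproxTangent {n : ℕ} (α : ℝ) (X : Set (EuclideanSpace ℝ (Fin n)))
    (x : EuclideanSpace ℝ (Fin n)) : Prop :=
  ∃ s : EuclideanSpace ℝ (Fin n), ‖s‖ = 1 ∧ ∀ ε > (0:ℝ),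
    Filter.Tendsto
      (fun r : ℝ => μH[α] ((X \ cone s ε x) ∩ Metric.closedBall x r) / ENNReal.ofReal (2 * r) ^ α)
      (𝓝[>] 0) (𝓝 0)

/-- `X` has a weak approximate `α`-tangent at `x`. -/
def HasWeakApproxTangent {n : ℕ} (α : ℝ) (X : Set (EuclideanSpace ℝ (Fin n)))
    (x : EuclideanSpace ℝ (Fin n)) : Prop :=
  ∃ ρ > (0:ℝ), ∃ s : ℝ → EuclideanSpace ℝ (Fin n), (∀ r ∈ Set.Ioo (0:ℝ) ρ, ‖s r‖ = 1) ∧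
    ∀ ε > (0:ℝ),
      Filter.Tendsto
        (fun r : ℝ =>
          μH[α] ((X \ cone (s r) ε x) ∩ Metric.closedBall x r) / ENNReal.ofReal (2 * r) ^ α)
        (𝓝[>] 0) (𝓝 0)

/-- Lower `α`-density of `X` at `x`. -/
def lowerDensity {n : ℕ} (α : ℝ) (X : Set (EuclideanSpace ℝ (Fin n)))
    (x : EuclideanSpace ℝ (Fin n)) : ℝ≥0∞ :=
  Filter.liminf
    (fun r : ℝ => μH[α] (X ∩ Metric.closedBall x r) / ENNReal.ofReal (2 * r) ^ α) (𝓝[>] 0)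

/-- Upper `α`-density of `X` at `x`. -/
def upperDensity {n : ℕ} (α : ℝ) (X : Set (EuclideanSpace ℝ (Fin n)))
    (x : EuclideanSpace ℝ (Fin n)) : ℝ≥0∞ :=
  Filter.limsup
    (fun r : ℝ => μH[α] (X ∩ Metric.closedBall x r) / ENNReal.ofReal (2 * r) ^ α) (𝓝[>] 0)


lemma aux_line {n : ℕ} (x z v : EuclideanSpace ℝ (Fin n)) (t : ℝ) :
    Real.sin (InnerProductGeometry.angle (z - x) (v - x)) * (‖z - x‖ * ‖v - x‖) ≤
      dist x (z + t • (v - z)) * ‖v - z‖ := by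
  rw [InnerProductGeometry.sin_angle_mul_norm_mul_norm]
  apply Real.sqrt_le_iff.mpr
  refine ⟨by positivity, ?_⟩
  have h1 : dist x (z + t • (v - z)) = ‖(z - x) + t • ((v - x) - (z - x))‖ := by
    rw [dist_comm, dist_eq_norm]
    congr 1
    rw [sub_sub_sub_cancel_right]
    abel
  have h2 : v - z = (v - x) - (z - x) := by abel
  rw [h1, h2]
  generalize z - x = a
  generalize v - x = b
  rw [mul_pow, ← real_inner_self_eq_norm_sq, ← real_inner_self_eq_norm_sq]
  simp only [inner_add_left, inner_add_right, inner_sub_left, inner_sub_right,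
    real_inner_smul_left, real_inner_smul_right]
  rw [real_inner_comm a b]
  nlinarith [sq_nonneg ((1 - 2 * t) * inner ℝ a b - (1 - t) * inner ℝ a a + t * inner ℝ b b)]

lemma aux_kappaI {n : ℕ} (X : Set (EuclideanSpace ℝ (Fin n))) (x z v : EuclideanSpace ℝ (Fin n))
    (hx : x ∈ closure X) (r c : ℝ) (hr : 0 < r) (hc : 0 < c) (hz : z ∈ closedBall x r)
    (hv : v ∈ closedBall x r) (hzx : z ≠ x) (hvx : v ≠ x)
    (hs : c ≤ Real.sin (InnerProductGeometry.angle (z - x) (v - x))) :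
    ENNReal.ofReal (c / (2 * r)) ≤ kappaI X z v := by
  have ha : 0 < ‖z - x‖ := norm_pos_iff.mpr (sub_ne_zero.mpr hzx)
  have hb : 0 < ‖v - x‖ := norm_pos_iff.mpr (sub_ne_zero.mpr hvx)
  have hzv : z ≠ v := by
    rintro rfl
    rw [InnerProductGeometry.angle_self (sub_ne_zero.mpr hzx)] at hs
    simp at hs
    linarith
  have hd : 0 < ‖v - z‖ := norm_pos_iff.mpr (sub_ne_zero.mpr hzv.symm)
  have hd2 : ‖v - z‖ ≤ 2 * r := by
    rw [← dist_eq_norm]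
    have := dist_triangle_right v z x
    rw [mem_closedBall] at hz hv
    linarith
  have hinf : c * (‖z - x‖ * ‖v - x‖) / ‖v - z‖ ≤ infDist x (lineThrough z v) := by
    have hne : (lineThrough z v).Nonempty := ⟨z, 0, by simp⟩
    rw [Metric.le_infDist hne]
    rintro y ⟨t, rfl⟩
    rw [div_le_iff₀ hd]
    refine le_trans ?_ (aux_line x z v t)
    gcongr
  set F : EuclideanSpace ℝ (Fin n) → ℝ := fun u =>
    2 * infDist u (lineThrough z v) / (‖z - u‖ * ‖v - u‖) with hF
  have hFx : c / (2 * r) < F x := by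
    have h1 : c / (2 * r) ≤ c / ‖v - z‖ := by gcongr
    have h2 : 2 * (c / ‖v - z‖) ≤ F x := by
      rw [hF]
      simp only
      rw [le_div_iff₀ (by positivity), mul_assoc]
      refine le_trans (le_of_eq ?_) (mul_le_mul_of_nonneg_left hinf (by norm_num : (0:ℝ) ≤ 2))
      ring
    have h3 : 0 < c / ‖v - z‖ := by positivity
    linarith
  have hcont : ContinuousAt F x := by
    apply ContinuousAt.div
    · exact (continuous_const.mul (continuous_infDist_pt _)).continuousAt
    · fun_prop
    · positivity
  have hev : ∀ᶠ u in 𝓝 x, c / (2 * r) < F u ∧ u ≠ z ∧ u ≠ v :=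
    (hcont.eventually (lt_mem_nhds hFx)).and
      ((eventually_ne_nhds hzx.symm).and (eventually_ne_nhds hvx.symm))
  obtain ⟨u, huX, h1, h2, h3⟩ := ((mem_closure_iff_frequently.mp hx).and_eventually hev).exists
  refine le_trans ?_ (le_iSup₂ (f := fun w (_ : w ∈ X) => kappa z v w) u huX)
  simp only [kappa]
  rw [if_pos ⟨hzv, h3.symm, h2.symm⟩]
  exact ENNReal.ofReal_le_ofReal h1.le

/-- The quotient in the definition of the weak approximate tangent. -/
def aQ {n : ℕ} (α : ℝ) (X : Set (EuclideanSpace ℝ (Fin n)))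
    (x : EuclideanSpace ℝ (Fin n)) (s : EuclideanSpace ℝ (Fin n)) (ε r : ℝ) : ℝ≥0∞ :=
  μH[α] ((X \ cone s ε x) ∩ Metric.closedBall x r) / ENNReal.ofReal (2 * r) ^ α

lemma aQ_mono {n : ℕ} (α : ℝ) (X : Set (EuclideanSpace ℝ (Fin n)))
    (x : EuclideanSpace ℝ (Fin n)) (s : EuclideanSpace ℝ (Fin n)) {ε η : ℝ} (h : η ≤ ε) (r : ℝ) :
    aQ α X x s ε r ≤ aQ α X x s η r := by
  unfold aQ
  gcongr
  rintro y ⟨h1, h2⟩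
  exact ⟨h1, h2.trans_le h⟩

lemma aux_diag {n : ℕ} (α : ℝ) (X : Set (EuclideanSpace ℝ (Fin n)))
    (x : EuclideanSpace ℝ (Fin n))
    (H : ∀ η > (0:ℝ), ∀ᶠ r in 𝓝[>] (0:ℝ), ∃ s : EuclideanSpace ℝ (Fin n), ‖s‖ = 1 ∧
      aQ α X x s η r ≤ ENNReal.ofReal η) : HasWeakApproxTangent α X x := by
  set S : ℝ → Set ℝ := fun r => {η | 0 < η ∧ ∃ s : EuclideanSpace ℝ (Fin n), ‖s‖ = 1 ∧
      aQ α X x s η r ≤ ENNReal.ofReal η} with hS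
  have hbdd : ∀ r, BddBelow (S r) := fun r => ⟨0, fun η h => h.1.le⟩
  have key : ∀ r : ℝ, ∃ s : EuclideanSpace ℝ (Fin n), 0 < r → (S r).Nonempty →
      ‖s‖ = 1 ∧ ∃ η < sInf (S r) + r, aQ α X x s η r ≤ ENNReal.ofReal η := by
    intro r
    by_cases h : 0 < r ∧ (S r).Nonempty
    · obtain ⟨η, ⟨h0, s, hs, hq⟩, hlt⟩ := exists_lt_of_csInf_lt h.2 (lt_add_of_pos_right (sInf (S r)) h.1)
      exact ⟨s, fun _ _ => ⟨hs, η, hlt, hq⟩⟩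
    · exact ⟨0, fun h1 h2 => absurd ⟨h1, h2⟩ h⟩
  choose s hs using key
  have h1 := H 1 one_pos
  rw [eventually_nhdsWithin_iff, Metric.eventually_nhds_iff] at h1
  obtain ⟨ρ, hρ, h1⟩ := h1
  refine ⟨ρ, hρ, s, ?_, ?_⟩
  · intro r hr
    refine (hs r hr.1 ⟨1, one_pos, h1 ?_ hr.1⟩).1
    rw [Real.dist_eq, sub_zero, abs_of_pos hr.1]
    exact hr.2
  · intro ε hε
    rw [ENNReal.tendsto_nhds_zero]
    intro δ hδ
    obtain ⟨δ', hδ'0, hδ'⟩ : ∃ δ' : ℝ, 0 < δ' ∧ ENNReal.ofReal δ' ≤ δ := by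
      obtain ⟨q, hq0, hq⟩ := ENNReal.lt_iff_exists_nnreal_btwn.mp hδ
      refine ⟨q, by exact_mod_cast hq0, by simpa using hq.le⟩
    set e := min ε δ' with he
    have he0 : 0 < e := lt_min hε hδ'0
    filter_upwards [H (e / 2) (half_pos he0), Ioo_mem_nhdsGT (half_pos he0)] with r hr hr2
    have hmem : e / 2 ∈ S r := ⟨half_pos he0, hr⟩
    obtain ⟨-, η, hη, hq⟩ := hs r hr2.1 ⟨_, hmem⟩
    have hle := csInf_le (hbdd r) hmem
    have hηe : η ≤ e := by linarith [hr2.2]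
    change aQ α X x (s r) ε r ≤ δ
    calc _ ≤ aQ α X x (s r) η r := aQ_mono _ _ _ _ (hηe.trans (min_le_left _ _)) _
      _ ≤ ENNReal.ofReal η := hq
      _ ≤ ENNReal.ofReal δ' := ENNReal.ofReal_le_ofReal (hηe.trans (min_le_right _ _))
      _ ≤ δ := hδ'

lemma aux_sin {n : ℕ} (x z v : EuclideanSpace ℝ (Fin n)) (ε : ℝ) (hε : 0 < ε)
    (hz : z ≠ x) (hv : v ≠ x) (h : z ∉ cone (‖v - x‖⁻¹ • (v - x)) ε x) :
    ε ≤ Real.pi / 2 ∧ Real.sin ε ≤ Real.sin (InnerProductGeometry.angle (z - x) (v - x)) := by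
  have hb : 0 < ‖v - x‖⁻¹ := inv_pos.mpr (norm_pos_iff.mpr (sub_ne_zero.mpr hv))
  have h' : ε ≤ min (InnerProductGeometry.angle (z - x) (v - x))
      (Real.pi - InnerProductGeometry.angle (z - x) (v - x)) := by
    by_contra hcon
    refine h ⟨hz, ?_⟩
    rw [InnerProductGeometry.angle_neg_right, InnerProductGeometry.angle_smul_right_of_pos _ _ hb]
    exact not_le.mp hcon
  rw [le_min_iff] at h'
  have hpi : ε ≤ Real.pi / 2 := by linarith [h'.1, h'.2]
  refine ⟨hpi, ?_⟩
  generalize InnerProductGeometry.angle (z - x) (v - x) = θ at *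
  rcases le_total θ (Real.pi / 2) with h2 | h2
  · exact Real.sin_le_sin_of_le_of_le_pi_div_two (by linarith) h2 h'.1
  · rw [← Real.sin_pi_sub θ]
    exact Real.sin_le_sin_of_le_of_le_pi_div_two (by linarith) (by linarith) h'.2

lemma aux_cone_meas {n : ℕ} (s x : EuclideanSpace ℝ (Fin n)) (ε : ℝ) :
    MeasurableSet (cone s ε x) := by
  unfold cone
  have h : ∀ w : EuclideanSpace ℝ (Fin n),
      Measurable fun y : EuclideanSpace ℝ (Fin n) => InnerProductGeometry.angle (y - x) w := by
    intro w
    unfold InnerProductGeometry.angle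
    refine Real.measurable_arccos.comp ?_
    fun_prop
  apply MeasurableSet.inter
  · exact (measurableSet_singleton x).compl
  · exact measurableSet_lt ((h s).min (h (-s))) measurable_const

lemma aux_energy {n : ℕ} (X : Set (EuclideanSpace ℝ (Fin n)))
    (α p : ℝ) (hα : 0 < α) (hp : 2 * α ≤ p)
    (x : EuclideanSpace ℝ (Fin n)) (hx : x ∈ closure X) (ε : ℝ) (hε : 0 < ε) (hεpi : ε < Real.pi)
    (θ : ℝ≥0∞) (r : ℝ) (hr : 0 < r) (hr1 : 2 * r ≤ 1)
    (hθ : θ < μH[α] (X ∩ closedBall x r) / ENNReal.ofReal (2 * r) ^ α)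
    (hbad : ∀ s : EuclideanSpace ℝ (Fin n), ‖s‖ = 1 → ENNReal.ofReal ε < aQ α X x s ε r) :
    ENNReal.ofReal (Real.sin ε) ^ p * ENNReal.ofReal ε * θ ≤
      ∫⁻ y in closedBall x r, (∫⁻ w in X, kappaI X w y ^ p ∂ μH[α]) ∂ ((μH[α]).restrict X) := by
  have hsin : 0 < Real.sin ε := Real.sin_pos_of_pos_of_lt_pi hε hεpi
  have h0 : μH[α] ({x} : Set (EuclideanSpace ℝ (Fin n))) = 0 := by
    have := Measure.nullSingletonClass_hausdorff (EuclideanSpace ℝ (Fin n)) hα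
    exact measure_singleton x
  set R : ℝ≥0∞ := ENNReal.ofReal (2 * r) ^ α with hR
  have h2r : ENNReal.ofReal (2 * r) ≠ 0 := by simp [hr]
  have hR0 : R ≠ 0 := by
    simp [hR, ENNReal.rpow_eq_zero_iff, hr, hα.le]
  have hRt : R ≠ ⊤ := ENNReal.rpow_ne_top_of_nonneg hα.le ENNReal.ofReal_ne_top
  set k : ℝ≥0∞ := ENNReal.ofReal (Real.sin ε / (2 * r)) with hk
  have inner : ∀ v ∈ closedBall x r \ {x},
      k ^ p * (ENNReal.ofReal ε * R) ≤ ∫⁻ w in X, kappaI X w v ^ p ∂ μH[α] := by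
    rintro v ⟨hv, hvx⟩
    have hvx : v ≠ x := hvx
    set s := ‖v - x‖⁻¹ • (v - x) with hs
    have hs1 : ‖s‖ = 1 := by
      rw [hs, norm_smul, norm_inv, norm_norm]
      exact inv_mul_cancel₀ (norm_ne_zero_iff.mpr (sub_ne_zero.mpr hvx))
    set T := (closedBall x r \ {x}) \ cone s ε x with hT
    have hTm : MeasurableSet T :=
      (measurableSet_closedBall.diff (measurableSet_singleton x)).diff (aux_cone_meas s x ε)
    have hμ : ENNReal.ofReal ε * R ≤ (μH[α]).restrict X T := by
      rw [Measure.restrict_apply hTm]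
      have h1 := (hbad s hs1).le
      unfold aQ at h1
      rw [ENNReal.le_div_iff_mul_le (Or.inl hR0) (Or.inl hRt)] at h1
      refine h1.trans ?_
      have hsub : (X \ cone s ε x) ∩ closedBall x r ⊆ (T ∩ X) ∪ {x} := by
        rintro y ⟨⟨hy1, hy2⟩, hy3⟩
        by_cases hyx : y = x
        · right; exact hyx
        · left; exact ⟨⟨⟨hy3, hyx⟩, hy2⟩, hy1⟩
      refine (measure_mono hsub).trans ((measure_union_le _ _).trans ?_)
      rw [h0, add_zero]
    calc k ^ p * (ENNReal.ofReal ε * R) ≤ k ^ p * (μH[α]).restrict X T := by gcongr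
      _ = ∫⁻ w in T, k ^ p ∂ ((μH[α]).restrict X) := by rw [setLIntegral_const]
      _ ≤ ∫⁻ w in T, kappaI X w v ^ p ∂ ((μH[α]).restrict X) := by
        refine setLIntegral_mono' hTm ?_
        rintro w ⟨⟨hw1, hw2⟩, hw3⟩
        refine ENNReal.rpow_le_rpow ?_ (by linarith)
        exact aux_kappaI X x w v hx r _ hr hsin hw1 hv hw2 hvx (aux_sin x w v ε hε hw2 hvx hw3).2
      _ ≤ _ := setLIntegral_le_lintegral _ _
  have hB : MeasurableSet (closedBall x r \ {x}) :=
    measurableSet_closedBall.diff (measurableSet_singleton x)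
  have hμB : θ * R ≤ (μH[α]).restrict X (closedBall x r \ {x}) := by
    rw [Measure.restrict_apply hB]
    have h1 := hθ.le
    rw [ENNReal.le_div_iff_mul_le (Or.inl hR0) (Or.inl hRt)] at h1
    refine h1.trans ?_
    have hsub : X ∩ closedBall x r ⊆ ((closedBall x r \ {x}) ∩ X) ∪ {x} := by
      rintro y ⟨hy1, hy3⟩
      by_cases hyx : y = x
      · right; exact hyx
      · left; exact ⟨⟨hy3, hyx⟩, hy1⟩
    refine (measure_mono hsub).trans ((measure_union_le _ _).trans ?_)
    rw [h0, add_zero]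
  have hp0 : 0 ≤ p := by linarith
  have hscale : ENNReal.ofReal (Real.sin ε) ^ p ≤ k ^ p * (R * R) := by
    have hRR : R * R = ENNReal.ofReal (2 * r) ^ (2 * α) := by
      rw [hR, ← ENNReal.rpow_add _ _ h2r ENNReal.ofReal_ne_top, ← two_mul]
    have hDp : ENNReal.ofReal (2 * r) ^ p ≤ R * R := by
      rw [hRR]
      exact ENNReal.rpow_le_rpow_of_exponent_ge (ENNReal.ofReal_le_one.mpr hr1) hp
    calc ENNReal.ofReal (Real.sin ε) ^ p = (k * ENNReal.ofReal (2 * r)) ^ p := by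
          rw [hk, ← ENNReal.ofReal_mul (by positivity), div_mul_cancel₀ _ (by positivity)]
      _ = k ^ p * ENNReal.ofReal (2 * r) ^ p := ENNReal.mul_rpow_of_nonneg _ _ hp0
      _ ≤ _ := by gcongr
  calc ENNReal.ofReal (Real.sin ε) ^ p * ENNReal.ofReal ε * θ
      ≤ (k ^ p * (R * R)) * ENNReal.ofReal ε * θ := by gcongr
    _ = (k ^ p * (ENNReal.ofReal ε * R)) * (θ * R) := by ring
    _ ≤ (k ^ p * (ENNReal.ofReal ε * R)) * (μH[α]).restrict X (closedBall x r \ {x}) := by gcongr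
    _ = ∫⁻ y in closedBall x r \ {x}, k ^ p * (ENNReal.ofReal ε * R) ∂ ((μH[α]).restrict X) := by
      rw [setLIntegral_const]
    _ ≤ ∫⁻ y in closedBall x r \ {x}, (∫⁻ w in X, kappaI X w y ^ p ∂ μH[α])
          ∂ ((μH[α]).restrict X) := setLIntegral_mono' hB inner
    _ ≤ _ := lintegral_mono_set sdiff_subset

theorem finite_energyI_implies_weak_approx_tangent (n : ℕ) (X : Set (EuclideanSpace ℝ (Fin n)))
    (α p : ℝ) (hα : α ∈ Set.Ioi (0 : ℝ)) (hp : p ∈ Set.Ici (2 * α))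
    (x : EuclideanSpace ℝ (Fin n)) (hd : 0 < lowerDensity α X x)
    (hE : energyI p α X < ⊤) :
    HasWeakApproxTangent α X x := by
  have hα : 0 < α := hα
  have hp : 2 * α ≤ p := hp
  have h0 : μH[α] ({x} : Set (EuclideanSpace ℝ (Fin n))) = 0 := by
    have := Measure.nullSingletonClass_hausdorff (EuclideanSpace ℝ (Fin n)) hα
    exact measure_singleton x
  obtain ⟨θ, hθ0, hθ⟩ := ENNReal.lt_iff_exists_nnreal_btwn.mp hd
  have hev : ∀ᶠ r in 𝓝[>] (0:ℝ),
      (θ : ℝ≥0∞) < μH[α] (X ∩ closedBall x r) / ENNReal.ofReal (2 * r) ^ α :=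
    eventually_lt_of_lt_liminf hθ
  have hx : x ∈ closure X := by
    rw [Metric.mem_closure_iff]
    intro e he
    obtain ⟨r, hr, hr2⟩ := (hev.and (Ioo_mem_nhdsGT he)).exists
    have hne : (X ∩ closedBall x r).Nonempty := by
      by_contra hcon
      rw [Set.not_nonempty_iff_eq_empty] at hcon
      rw [hcon] at hr
      simp at hr
    obtain ⟨y, hy, hyb⟩ := hne
    rw [mem_closedBall, dist_comm] at hyb
    exact ⟨y, hy, hyb.trans_lt hr2.2⟩
  set g : EuclideanSpace ℝ (Fin n) → ℝ≥0∞ := fun y => ∫⁻ w in X, kappaI X w y ^ p ∂ μH[α] with hg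
  set ν := ((μH[α]).restrict X).withDensity g with hν
  have hνfin : ν univ ≠ ⊤ := by
    rw [hν, withDensity_apply _ MeasurableSet.univ, Measure.restrict_univ]
    exact hE.ne
  have hνx : ν {x} = 0 := by
    refine withDensity_absolutelyContinuous _ _ ?_
    exact le_antisymm ((Measure.restrict_apply_le _ _).trans h0.le) bot_le
  have hνlim : Tendsto (fun r : ℝ => ν (closedBall x r)) (𝓝[>] 0) (𝓝 0) := by
    have h1 : Tendsto (fun r : ℝ => ν (closedBall x r)) (𝓝[>] 0)
        (𝓝 (ν (⋂ r > (0:ℝ), closedBall x r))) := by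
      apply tendsto_measure_biInter_gt
      · intro r _
        exact measurableSet_closedBall.nullMeasurableSet
      · intro i j _ hij
        exact closedBall_subset_closedBall hij
      · exact ⟨1, one_pos, ne_top_of_le_ne_top hνfin (measure_mono (subset_univ _))⟩
    have h2 : (⋂ r > (0:ℝ), closedBall x r) = {x} := by
      ext y
      simp only [mem_iInter, mem_closedBall, mem_singleton_iff]
      constructor
      · intro h
        exact dist_le_zero.mp (le_of_forall_gt_imp_ge_of_dense h)
      · rintro rfl r hr
        simpa using le_of_lt hr
    rwa [h2, hνx] at h1
  have main : ∀ ε > (0:ℝ), ε < Real.pi →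
      ∀ᶠ r in 𝓝[>] (0:ℝ), ∃ s : EuclideanSpace ℝ (Fin n), ‖s‖ = 1 ∧
      aQ α X x s ε r ≤ ENNReal.ofReal ε := by
    intro ε hε hεpi
    have hsin : 0 < Real.sin ε := Real.sin_pos_of_pos_of_lt_pi hε hεpi
    have hc : 0 < ENNReal.ofReal (Real.sin ε) ^ p * ENNReal.ofReal ε * θ := by
      refine ENNReal.mul_pos (mul_ne_zero ?_ ?_) hθ0.ne'
      · exact (ENNReal.rpow_pos (by simpa using hsin) ENNReal.ofReal_ne_top).ne'
      · simpa using hε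
    filter_upwards [hev, hνlim.eventually (gt_mem_nhds hc),
      Ioo_mem_nhdsGT (show (0:ℝ) < 1 / 2 by norm_num)] with r h1 h2 h3
    by_contra! hcon
    have := aux_energy X α p hα hp x hx ε hε hεpi θ r h3.1 (by linarith [h3.2]) h1 hcon
    rw [hν, withDensity_apply _ measurableSet_closedBall] at h2
    exact absurd this (not_le.mpr h2)
  apply aux_diag
  intro η hη
  filter_upwards [main (min η 1) (lt_min hη one_pos)
    ((min_le_right _ _).trans_lt (by linarith [Real.pi_gt_three]))] with r ⟨s, hs, hq⟩
  exact ⟨s, hs, (aQ_mono α X x s (min_le_left η 1) r).trans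
    (hq.trans (ENNReal.ofReal_le_ofReal (min_le_left _ _)))⟩

end
end

section
/- Let E = ([−1,1]×{0}) ∪ ({0}×[0,1]) ⊂ ℝ². For every p ∈ (0,1) one has U_p^1(E) ≤ 6/(1−p); in particular U_p^1(E) < ∞. -/
open MeasureTheory Metric Set Filter
open scoped ENNReal Topology Classical

noncomputable section

/-- The T-shaped set `E = ([-1,1] × {0}) ∪ ({0} × [0,1])` in `ℝ²`. -/
def Eset : Set (EuclideanSpace ℝ (Fin 2)) :=
  {p | p 1 = 0 ∧ p 0 ∈ Set.Icc (-1 : ℝ) 1} ∪ {p | p 0 = 0 ∧ p 1 ∈ Set.Icc (0 : ℝ) 1}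

lemma aux_infDist_mul_le {n : ℕ} (x y z : EuclideanSpace ℝ (Fin n)) (hxy : x ≠ y) :
    Metric.infDist z (lineThrough x y) * ‖x - y‖ ≤ ‖x - z‖ * ‖y - z‖ := by
  obtain ⟨u, hu⟩ : ∃ u, u = z - x := ⟨_, rfl⟩
  obtain ⟨d, hd⟩ : ∃ d, d = y - x := ⟨_, rfl⟩
  have hd0 : d ≠ 0 := by
    rw [hd]; exact sub_ne_zero.mpr hxy.symm
  have hdn : 0 < ‖d‖ := norm_pos_iff.mpr hd0
  have e1 : ‖x - z‖ = ‖u‖ := by rw [hu, norm_sub_rev]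
  have e2 : ‖x - y‖ = ‖d‖ := by rw [hd, norm_sub_rev]
  have e3 : ‖y - z‖ = ‖d - u‖ := by rw [hd, hu]; congr 1; abel
  obtain ⟨t, ht⟩ : ∃ t : ℝ, t = inner ℝ u d / ‖d‖ ^ 2 := ⟨_, rfl⟩
  have h1 : Metric.infDist z (lineThrough x y) ≤ ‖u - t • d‖ := by
    have hm : x + t • (y - x) ∈ lineThrough x y := ⟨t, rfl⟩
    have := Metric.infDist_le_dist_of_mem (x := z) hm
    rw [dist_eq_norm] at this
    rw [hu, hd, sub_sub]
    exact this
  rw [e1, e2, e3]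
  refine (mul_le_mul_of_nonneg_right h1 hdn.le).trans ?_
  have ht' : t * ‖d‖ ^ 2 = inner ℝ u d := by
    rw [ht]; field_simp
  refine (pow_le_pow_iff_left₀ (by positivity) (by positivity) two_ne_zero).mp ?_
  rw [mul_pow, mul_pow, norm_sub_sq_real, norm_sub_sq_real, norm_smul, inner_smul_right, mul_pow,
    Real.norm_eq_abs, sq_abs, real_inner_comm u d]
  generalize inner ℝ u d = q at *
  have : t * q * ‖d‖ ^ 2 = q ^ 2 := by rw [mul_right_comm, ht']; ring
  have : t ^ 2 * ‖d‖ ^ 2 * ‖d‖ ^ 2 = q ^ 2 := by rw [← ht']; ring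
  nlinarith [sq_nonneg (‖u‖ ^ 2 - q)]

lemma aux_kappa_le {n : ℕ} (x v w : EuclideanSpace ℝ (Fin n)) (a : ℝ) (ha : 0 < a)
    (h : a ≤ ‖x - v‖ ∨ a ≤ ‖x - w‖) : kappa x v w ≤ ENNReal.ofReal (2 / a) := by
  unfold kappa
  split_ifs with hd
  · obtain ⟨h1, h2, h3⟩ := hd
    apply ENNReal.ofReal_le_ofReal
    have p2 : 0 < ‖v - w‖ := norm_pos_iff.mpr (sub_ne_zero.mpr h2)
    have p3 : 0 < ‖x - w‖ := norm_pos_iff.mpr (sub_ne_zero.mpr h3)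
    have hn : 0 ≤ Metric.infDist w (lineThrough x v) := Metric.infDist_nonneg
    rw [div_le_div_iff₀ (by positivity) ha]
    rcases h with h | h
    · have := aux_infDist_mul_le x v w h1
      nlinarith [mul_le_mul_of_nonneg_left h hn]
    · have hm : v ∈ lineThrough x v := ⟨1, by simp⟩
      have := Metric.infDist_le_dist_of_mem (x := w) hm
      rw [dist_eq_norm, norm_sub_rev] at this
      have := mul_le_mul this h ha.le p2.le
      nlinarith
  · exact zero_le

lemma aux_kappa_zero {n : ℕ} (x v w : EuclideanSpace ℝ (Fin n)) (h : x ≠ v → w ∈ lineThrough x v) :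
    kappa x v w = 0 := by
  unfold kappa
  split_ifs with hd
  · rw [Metric.infDist_zero_of_mem (h hd.1)]; simp
  · rfl

lemma aux_kappaG_le (X : Set (EuclideanSpace ℝ (Fin 2))) (i j : Fin 2) (hij : i ≠ j)
    (hX : ∀ v ∈ X, v i = 0 ∨ v j = 0) (x : EuclideanSpace ℝ (Fin 2)) (hx : x j = 0)
    (a : ℝ) (ha : 0 < a) (hxa : |x i| = a) : kappaG X x ≤ ENNReal.ofReal (2 / a) := by
  have hdist : ∀ v : EuclideanSpace ℝ (Fin 2), v i = 0 → a ≤ ‖x - v‖ := by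
    intro v hv
    have := PiLp.norm_apply_le (x - v) i
    simpa [hv, hxa] using this
  unfold kappaG
  refine iSup₂_le fun v hv => iSup₂_le fun w hw => ?_
  rcases hX v hv with h | h
  · exact aux_kappa_le x v w a ha (Or.inl (hdist v h))
  rcases hX w hw with h' | h'
  · exact aux_kappa_le x v w a ha (Or.inr (hdist w h'))
  rw [aux_kappa_zero]
  · exact zero_le
  intro hne
  have hall : ∀ k : Fin 2, k = i ∨ k = j := by omega
  have hne' : v i - x i ≠ 0 := by
    intro hh
    apply hne
    ext k
    rcases hall k with rfl | rfl
    · linarith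
    · rw [hx, h]
  refine ⟨(w i - x i) / (v i - x i), ?_⟩
  ext k
  rcases hall k with rfl | rfl
  · simp; field_simp; ring
  · simp [hx, h, h']

lemma aux_lintegral (p : ℝ) (hp : p ∈ Set.Ioo (0 : ℝ) 1) :
    ∫⁻ t in Set.Icc (0:ℝ) 1, ENNReal.ofReal (2 / t) ^ p ≤ ENNReal.ofReal (2 / (1 - p)) := by
  obtain ⟨hp0, hp1⟩ := hp
  rw [← Measure.restrict_congr_set (Ioc_ae_eq_Icc (μ := volume) (a := (0:ℝ)) (b := 1))]
  have h1 : ∫⁻ t in Set.Ioc (0:ℝ) 1, ENNReal.ofReal (2 / t) ^ p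
      = ∫⁻ t in Set.Ioc (0:ℝ) 1, ENNReal.ofReal (2 ^ p * t ^ (-p)) := by
    refine setLIntegral_congr_fun measurableSet_Ioc fun t ht => ?_
    have ht0 : 0 < t := ht.1
    rw [ENNReal.ofReal_rpow_of_nonneg (by positivity) hp0.le, Real.div_rpow (by norm_num) ht0.le,
      Real.rpow_neg ht0.le, div_eq_mul_inv]
  have hint : IntervalIntegrable (fun t : ℝ => (2:ℝ) ^ p * t ^ (-p)) volume 0 1 :=
    (intervalIntegral.intervalIntegrable_rpow' (by linarith)).const_mul _
  have hint' := (intervalIntegrable_iff_integrableOn_Ioc_of_le zero_le_one).mp hint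
  rw [h1, ← ofReal_integral_eq_lintegral_ofReal hint']
  · apply ENNReal.ofReal_le_ofReal
    rw [← intervalIntegral.integral_of_le zero_le_one, intervalIntegral.integral_const_mul,
      integral_rpow (Or.inl (by linarith)), Real.one_rpow, Real.zero_rpow (by linarith),
      sub_zero, mul_one_div, neg_add_eq_sub]
    have : (2:ℝ) ^ p ≤ 2 ^ (1:ℝ) := Real.rpow_le_rpow_of_exponent_le (by norm_num) hp1.le
    rw [Real.rpow_one] at this
    have : 0 < 1 - p := by linarith
    gcongr
  · filter_upwards [ae_restrict_mem measurableSet_Ioc] with t ht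
    have ht0 : 0 < t := ht.1
    simp only [Pi.zero_apply]
    positivity

lemma aux_piece (p : ℝ) (hp : p ∈ Set.Ioo (0 : ℝ) 1) (f : ℝ → EuclideanSpace ℝ (Fin 2))
    (hf : Isometry f) (F : EuclideanSpace ℝ (Fin 2) → ℝ≥0∞)
    (hF : ∀ t, 0 < t → F (f t) ≤ ENNReal.ofReal (2 / t)) :
    ∫⁻ x in f '' Set.Icc (0:ℝ) 1, F x ^ p ∂ μH[1] ≤ ENNReal.ofReal (2 / (1 - p)) := by
  have hm : MeasurableEmbedding f := hf.isClosedEmbedding.measurableEmbedding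
  have hr : (μH[1] : Measure (EuclideanSpace ℝ (Fin 2))).restrict (f '' Set.Icc (0:ℝ) 1)
      = Measure.map f ((volume : Measure ℝ).restrict (Set.Icc 0 1)) := by
    have h1 := hf.map_hausdorffMeasure (d := 1) (Or.inl zero_le_one)
    rw [hausdorffMeasure_real] at h1
    have h2 := hm.restrict_map (volume : Measure ℝ) (f '' Set.Icc (0:ℝ) 1)
    rw [hf.injective.preimage_image, h1, Measure.restrict_restrict_of_subset
      (Set.image_subset_range _ _)] at h2
    exact h2
  rw [hr, hm.lintegral_map]
  refine le_trans ?_ (aux_lintegral p hp)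
  rw [← Measure.restrict_congr_set (Ioc_ae_eq_Icc (μ := volume) (a := (0:ℝ)) (b := 1))]
  refine setLIntegral_mono' measurableSet_Ioc fun t ht => ?_
  exact ENNReal.rpow_le_rpow (hF t ht.1) hp.1.le

lemma aux_isometry (e : EuclideanSpace ℝ (Fin 2)) (he : ‖e‖ = 1) :
    Isometry (fun t : ℝ => t • e) := by
  refine Isometry.of_dist_eq fun s t => ?_
  rw [dist_eq_norm, ← sub_smul, norm_smul, he, mul_one, dist_eq_norm]

lemma aux_subset : Eset ⊆ ((fun t : ℝ => t • (!₂[1, 0] : EuclideanSpace ℝ (Fin 2))) '' Set.Icc 0 1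
    ∪ (fun t : ℝ => t • (!₂[-1, 0] : EuclideanSpace ℝ (Fin 2))) '' Set.Icc 0 1)
    ∪ (fun t : ℝ => t • (!₂[0, 1] : EuclideanSpace ℝ (Fin 2))) '' Set.Icc 0 1 := by
  rintro x (⟨h1, h2, h3⟩ | ⟨h1, h2⟩)
  · left
    rcases le_total 0 (x 0) with h | h
    · left
      refine ⟨x 0, ⟨h, h3⟩, ?_⟩
      ext k; fin_cases k <;> simp [h1]
    · right
      refine ⟨- x 0, ⟨by linarith, by linarith⟩, ?_⟩
      ext k; fin_cases k <;> simp [h1]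
  · right
    refine ⟨x 1, h2, ?_⟩
    ext k; fin_cases k <;> simp [h1]

theorem Eset_energyU_lt_top (p : ℝ) (hp : p ∈ Set.Ioo (0 : ℝ) 1) :
    energyU p 1 Eset ≤ ENNReal.ofReal (6 / (1 - p)) ∧ energyU p 1 Eset < ⊤ := by
  have key : energyU p 1 Eset ≤ ENNReal.ofReal (6 / (1 - p)) := by
    have hE : ∀ v ∈ Eset, v 0 = 0 ∨ v 1 = 0 := by
      rintro v (h | h)
      · exact Or.inr h.1
      · exact Or.inl h.1
    have hE' : ∀ v ∈ Eset, v 1 = 0 ∨ v 0 = 0 := fun v hv => (hE v hv).symm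
    have hq : 0 < 1 - p := by linarith [hp.2]
    have a1 := aux_piece p hp _ (aux_isometry !₂[1, 0] (by simp [EuclideanSpace.norm_eq]))
      (kappaG Eset) (fun t ht => aux_kappaG_le Eset 0 1 (by decide) hE _ (by simp) t ht
        (by simp [abs_of_pos ht]))
    have a2 := aux_piece p hp _ (aux_isometry !₂[-1, 0] (by simp [EuclideanSpace.norm_eq]))
      (kappaG Eset) (fun t ht => aux_kappaG_le Eset 0 1 (by decide) hE _ (by simp) t ht
        (by simp [abs_of_pos ht]))
    have a3 := aux_piece p hp _ (aux_isometry !₂[0, 1] (by simp [EuclideanSpace.norm_eq]))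
      (kappaG Eset) (fun t ht => aux_kappaG_le Eset 1 0 (by decide) hE' _ (by simp) t ht
        (by simp [abs_of_pos ht]))
    have hsum : ENNReal.ofReal (6 / (1 - p)) = ENNReal.ofReal (2 / (1 - p))
        + ENNReal.ofReal (2 / (1 - p)) + ENNReal.ofReal (2 / (1 - p)) := by
      rw [← ENNReal.ofReal_add (by positivity) (by positivity),
        ← ENNReal.ofReal_add (by positivity) (by positivity)]
      congr 1
      ring
    unfold energyU
    rw [hsum]
    refine (lintegral_mono_set aux_subset).trans ?_
    refine (lintegral_union_le _ _ _).trans ?_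
    refine add_le_add ((lintegral_union_le _ _ _).trans (add_le_add a1 a2)) a3
  exact ⟨key, key.trans_lt ENNReal.ofReal_lt_top⟩

end
end

section
/- Let E = ([−1,1]×{0}) ∪ ({0}×[0,1]) ⊂ ℝ². For every p ∈ (1,2) one has I_p^1(E) ≤ 9·2^{3p/2+1}·(2^{1−p}−1) / ((1−p)(2−p)); in particular I_p^1(E) < ∞. -/
open MeasureTheory Metric Set Filter
open scoped ENNReal Topology Classical

noncomputable section

/-- The algebraic inequality behind the curvature estimate on the T-shaped set. -/
lemma det_ineq (a a' b b' c c' : ℝ) (ha : a' = 0 ∨ a = 0) (hb : b' = 0 ∨ b = 0)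
    (hc : c' = 0 ∨ c = 0) :
    ((b - a) * (c' - a') - (b' - a') * (c - a)) ^ 2 * (a ^ 2 + a' ^ 2 + (b ^ 2 + b' ^ 2)) ≤
      ((b - a) ^ 2 + (b' - a') ^ 2) * ((a - c) ^ 2 + (a' - c') ^ 2) *
        ((b - c) ^ 2 + (b' - c') ^ 2) := by
  rcases ha with rfl | rfl <;> rcases hb with rfl | rfl <;> rcases hc with rfl | rfl
  · have : 0 ≤ ((b - a) * (a - c) * (b - c)) ^ 2 := sq_nonneg _
    nlinarith
  · have : 0 ≤ (b - a) ^ 2 * ((a * b) ^ 2 + (c' ^ 2) ^ 2) := by positivity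
    nlinarith
  · have : 0 ≤ (a ^ 2 + b' ^ 2) * (a - c) ^ 2 * c ^ 2 := by positivity
    nlinarith
  · have : 0 ≤ (a ^ 2 + b' ^ 2) * (b' - c') ^ 2 * c' ^ 2 := by positivity
    nlinarith
  · have : 0 ≤ (b ^ 2 + a' ^ 2) * (b - c) ^ 2 * c ^ 2 := by positivity
    nlinarith
  · have : 0 ≤ (b ^ 2 + a' ^ 2) * (a' - c') ^ 2 * c' ^ 2 := by positivity
    nlinarith
  · have : 0 ≤ (b' - a') ^ 2 * ((a' * b') ^ 2 + (c ^ 2) ^ 2) := by positivity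
    nlinarith
  · have : 0 ≤ ((b' - a') * (a' - c') * (b' - c')) ^ 2 := sq_nonneg _
    nlinarith

lemma normsq2 (v : EuclideanSpace ℝ (Fin 2)) : ‖v‖ ^ 2 = v 0 ^ 2 + v 1 ^ 2 := by
  rw [EuclideanSpace.norm_sq_eq]; simp

lemma infDist_line (x y z : EuclideanSpace ℝ (Fin 2)) (hxy : x ≠ y) :
    (Metric.infDist z (lineThrough x y)) ^ 2 * ‖y - x‖ ^ 2 ≤
      ((y 0 - x 0) * (z 1 - x 1) - (y 1 - x 1) * (z 0 - x 0)) ^ 2 := by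
  have hpos : 0 < ‖y - x‖ ^ 2 := by
    have : 0 < ‖y - x‖ := norm_pos_iff.2 (sub_ne_zero.2 hxy.symm)
    positivity
  set t : ℝ := ((z 0 - x 0) * (y 0 - x 0) + (z 1 - x 1) * (y 1 - x 1)) / ‖y - x‖ ^ 2 with ht
  have hmem : x + t • (y - x) ∈ lineThrough x y := ⟨t, rfl⟩
  have h1 := Metric.infDist_le_dist_of_mem (x := z) hmem
  have h2 : (Metric.infDist z (lineThrough x y)) ^ 2 ≤ (dist z (x + t • (y - x))) ^ 2 :=
    pow_le_pow_left₀ Metric.infDist_nonneg h1 2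
  have hN : ‖y - x‖ ^ 2 = (y 0 - x 0) ^ 2 + (y 1 - x 1) ^ 2 := by
    rw [normsq2]; simp
  have htN : t * ((y 0 - x 0) ^ 2 + (y 1 - x 1) ^ 2) =
      (z 0 - x 0) * (y 0 - x 0) + (z 1 - x 1) * (y 1 - x 1) := by
    rw [← hN, ht, div_mul_cancel₀ _ hpos.ne']
  refine (mul_le_mul_of_nonneg_right h2 hpos.le).trans (le_of_eq ?_)
  rw [dist_eq_norm, normsq2, hN]
  simp only [PiLp.sub_apply, PiLp.add_apply, PiLp.smul_apply, smul_eq_mul]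
  linear_combination (t * ((y 0 - x 0) ^ 2 + (y 1 - x 1) ^ 2) -
      ((z 0 - x 0) * (y 0 - x 0) + (z 1 - x 1) * (y 1 - x 1))) * htN

lemma Eset_coord {x : EuclideanSpace ℝ (Fin 2)} (hx : x ∈ Eset) : x 1 = 0 ∨ x 0 = 0 := by
  rcases hx with h | h
  · exact Or.inl h.1
  · exact Or.inr h.1

lemma kappa_le {x y z : EuclideanSpace ℝ (Fin 2)} (hx : x ∈ Eset) (hy : y ∈ Eset)
    (hz : z ∈ Eset) :
    kappa x y z ≤ ENNReal.ofReal (2 * √2 / (‖x‖ + ‖y‖)) := by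
  unfold kappa
  split_ifs with h
  swap
  · exact zero_le
  obtain ⟨hxy, hyz, hxz⟩ := h
  apply ENNReal.ofReal_le_ofReal
  have h1 : 0 < ‖y - x‖ := norm_pos_iff.2 (sub_ne_zero.2 hxy.symm)
  have h2 : 0 < ‖x - z‖ := norm_pos_iff.2 (sub_ne_zero.2 hxz)
  have h3 : 0 < ‖y - z‖ := norm_pos_iff.2 (sub_ne_zero.2 hyz)
  have h4 : 0 < ‖x‖ + ‖y‖ := by
    have := norm_sub_le y x
    linarith
  have hI := infDist_line x y z hxy
  have hd := det_ineq (x 0) (x 1) (y 0) (y 1) (z 0) (z 1) (Eset_coord hx) (Eset_coord hy)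
    (Eset_coord hz)
  have e1 := normsq2 (y - x)
  have e2 := normsq2 (x - z)
  have e3 := normsq2 (y - z)
  simp only [PiLp.sub_apply] at e1 e2 e3
  rw [← normsq2 x, ← normsq2 y, ← e1, ← e2, ← e3] at hd
  set d := Metric.infDist z (lineThrough x y) with hdd
  have hd0 : 0 ≤ d := Metric.infDist_nonneg
  have hA : d ^ 2 * (‖x‖ ^ 2 + ‖y‖ ^ 2) ≤ ‖x - z‖ ^ 2 * ‖y - z‖ ^ 2 := by
    have := (mul_le_mul_of_nonneg_right hI (by positivity : 0 ≤ ‖x‖ ^ 2 + ‖y‖ ^ 2)).trans hd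
    have hp : 0 < ‖y - x‖ ^ 2 := by positivity
    refine le_of_mul_le_mul_left ?_ hp
    linarith
  have hB : d * (‖x‖ + ‖y‖) ≤ √2 * (‖x - z‖ * ‖y - z‖) := by
    refine (sq_le_sq₀ (by positivity) (by positivity)).1 ?_
    rw [mul_pow, mul_pow, Real.sq_sqrt (by norm_num), mul_pow]
    have : d ^ 2 * (‖x‖ + ‖y‖) ^ 2 ≤ d ^ 2 * (2 * (‖x‖ ^ 2 + ‖y‖ ^ 2)) := by
      apply mul_le_mul_of_nonneg_left _ (sq_nonneg _)
      nlinarith [sq_nonneg (‖x‖ - ‖y‖)]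
    linarith
  rw [div_le_div_iff₀ (by positivity) h4]
  linarith

lemma kappaI_le {x y : EuclideanSpace ℝ (Fin 2)} (hx : x ∈ Eset) (hy : y ∈ Eset) :
    kappaI Eset x y ≤ ENNReal.ofReal (2 * √2 / (‖x‖ + ‖y‖)) :=
  iSup₂_le fun _ hz => kappa_le hx hy hz

/-- Integration along a unit segment emanating from the origin. -/
lemma lintegral_segment (e : EuclideanSpace ℝ (Fin 2)) (he : ‖e‖ = 1) (h : ℝ → ℝ≥0∞) :
    ∫⁻ x in (fun t : ℝ => t • e) '' Icc 0 1, h ‖x‖ ∂μH[1] = ∫⁻ t in Ioc (0 : ℝ) 1, h t := by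
  have hiso : Isometry (fun t : ℝ => t • e) := by
    apply Isometry.of_dist_eq
    intro s t
    rw [dist_eq_norm, ← sub_smul, norm_smul, he, mul_one, Real.dist_eq, Real.norm_eq_abs]
  have hemb : MeasurableEmbedding (fun t : ℝ => t • e) :=
    hiso.isClosedEmbedding.measurableEmbedding
  have hmap := hiso.map_hausdorffMeasure (d := 1) (Or.inl zero_le_one)
  have hr : (μH[1] : Measure (EuclideanSpace ℝ (Fin 2))).restrict
      ((fun t : ℝ => t • e) '' Icc 0 1) =
      Measure.map (fun t : ℝ => t • e) ((volume : Measure ℝ).restrict (Icc 0 1)) := by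
    have := hemb.restrict_map (μH[1] : Measure ℝ) ((fun t : ℝ => t • e) '' Icc 0 1)
    rw [preimage_image_eq _ hiso.injective, hmap, Measure.restrict_restrict
      (hemb.measurableSet_image.2 measurableSet_Icc),
      inter_eq_left.2 (image_subset_range _ _), hausdorffMeasure_real] at this
    exact this
  rw [hr, hemb.lintegral_map, setLIntegral_congr Ioc_ae_eq_Icc.symm]
  apply setLIntegral_congr_fun measurableSet_Ioc
  intro t ht
  simp only
  rw [norm_smul, he, mul_one, Real.norm_of_nonneg ht.1.le]

lemma Eset_subset : Eset ⊆ (fun t : ℝ => t • (!₂[1, 0] : EuclideanSpace ℝ (Fin 2))) '' Icc 0 1 ∪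
    ((fun t : ℝ => t • (!₂[-1, 0] : EuclideanSpace ℝ (Fin 2))) '' Icc 0 1 ∪
     (fun t : ℝ => t • (!₂[0, 1] : EuclideanSpace ℝ (Fin 2))) '' Icc 0 1) := by
  rintro x (⟨h1, h2, h3⟩ | ⟨h1, h2, h3⟩)
  · rcases le_total 0 (x 0) with h | h
    · refine Or.inl ⟨x 0, ⟨h, h3⟩, ?_⟩
      ext i; fin_cases i <;> simp [h1]
    · refine Or.inr (Or.inl ⟨-x 0, ⟨by linarith, by linarith⟩, ?_⟩)
      ext i; fin_cases i <;> simp [h1]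
  · refine Or.inr (Or.inr ⟨x 1, ⟨h2, h3⟩, ?_⟩)
    ext i; fin_cases i <;> simp [h1]

lemma lintegral_Eset_le (h : ℝ → ℝ≥0∞) :
    ∫⁻ x in Eset, h ‖x‖ ∂μH[1] ≤ 3 * ∫⁻ t in Ioc (0 : ℝ) 1, h t := by
  refine (lintegral_mono_set Eset_subset).trans ((lintegral_union_le _ _ _).trans
    ((add_le_add_right (lintegral_union_le _ _ _) _).trans (le_of_eq ?_)))
  rw [lintegral_segment _ (by simp [EuclideanSpace.norm_eq]),
    lintegral_segment _ (by simp [EuclideanSpace.norm_eq]),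
    lintegral_segment _ (by simp [EuclideanSpace.norm_eq])]
  ring

lemma Eset_meas : MeasurableSet Eset := by
  have h0 : Measurable fun p : EuclideanSpace ℝ (Fin 2) => p 0 := by fun_prop
  have h1 : Measurable fun p : EuclideanSpace ℝ (Fin 2) => p 1 := by fun_prop
  exact ((h1 (measurableSet_singleton 0)).inter (h0 measurableSet_Icc)).union
    ((h0 (measurableSet_singleton 0)).inter (h1 measurableSet_Icc))

lemma inner_integral (p : ℝ) (hp : p ∈ Set.Ioo (1 : ℝ) 2) (b : ℝ) (hb : 0 < b) :
    ∫⁻ a in Ioc (0 : ℝ) 1, ENNReal.ofReal (2 * √2 / (a + b)) ^ p =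
      ENNReal.ofReal ((2 * √2) ^ p * (((1 + b) ^ (1 - p) - b ^ (1 - p)) / (1 - p))) := by
  have hnot : (0 : ℝ) ∉ uIcc b (1 + b) := by
    rw [uIcc_of_le (by linarith)]; intro h; linarith [h.1]
  have hI : ∫ a in (0 : ℝ)..1, (2 * √2) ^ p * (a + b) ^ (-p) =
      (2 * √2) ^ p * (((1 + b) ^ (1 - p) - b ^ (1 - p)) / (1 - p)) := by
    rw [intervalIntegral.integral_const_mul,
      intervalIntegral.integral_comp_add_right (fun t : ℝ => t ^ (-p)), zero_add,
      integral_rpow (Or.inr ⟨by linarith [hp.1], hnot⟩), neg_add_eq_sub]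
  have hint : IntervalIntegrable (fun a : ℝ => (2 * √2) ^ p * (a + b) ^ (-p)) volume 0 1 := by
    apply ContinuousOn.intervalIntegrable
    apply ContinuousOn.mul continuousOn_const
    apply ContinuousOn.rpow_const (by fun_prop)
    intro a ha
    rw [uIcc_of_le zero_le_one] at ha
    left; linarith [ha.1]
  rw [← hI, intervalIntegral.integral_of_le zero_le_one,
    ofReal_integral_eq_lintegral_ofReal
      ((intervalIntegrable_iff_integrableOn_Ioc_of_le zero_le_one).1 hint)]
  · apply setLIntegral_congr_fun measurableSet_Ioc
    intro a ha
    have hab : 0 < a + b := by linarith [ha.1]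
    simp only
    rw [ENNReal.ofReal_rpow_of_pos (by positivity), Real.div_rpow (by positivity) hab.le,
      Real.rpow_neg hab.le, div_eq_mul_inv]
  · refine (ae_restrict_iff' measurableSet_Ioc).2 (Eventually.of_forall fun a ha => ?_)
    have hab : 0 < a + b := by linarith [ha.1]
    simp only [Pi.zero_apply]
    positivity

lemma outer_integral (p : ℝ) (hp : p ∈ Set.Ioo (1 : ℝ) 2) :
    ∫⁻ b in Ioc (0 : ℝ) 1,
      ENNReal.ofReal ((2 * √2) ^ p * (((1 + b) ^ (1 - p) - b ^ (1 - p)) / (1 - p))) =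
      ENNReal.ofReal ((2 * √2) ^ p * (2 * (2 ^ (1 - p) - 1) / ((1 - p) * (2 - p)))) := by
  have hq : -1 < 1 - p := by linarith [hp.2]
  have i1 : IntervalIntegrable (fun b : ℝ => (1 + b) ^ (1 - p)) volume 0 1 := by
    apply ContinuousOn.intervalIntegrable
    apply ContinuousOn.rpow_const (by fun_prop)
    intro a ha
    rw [uIcc_of_le zero_le_one] at ha
    left; linarith [ha.1]
  have i2 : IntervalIntegrable (fun b : ℝ => b ^ (1 - p)) volume 0 1 :=
    intervalIntegral.intervalIntegrable_rpow' hq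
  have hI : ∫ b in (0 : ℝ)..1, (2 * √2) ^ p * (((1 + b) ^ (1 - p) - b ^ (1 - p)) / (1 - p)) =
      (2 * √2) ^ p * (2 * (2 ^ (1 - p) - 1) / ((1 - p) * (2 - p))) := by
    rw [intervalIntegral.integral_const_mul, intervalIntegral.integral_div,
      intervalIntegral.integral_sub i1 i2,
      intervalIntegral.integral_comp_add_left (fun t : ℝ => t ^ (1 - p)),
      integral_rpow (Or.inl hq), integral_rpow (Or.inl hq)]
    have h2 : (2 : ℝ) ^ (1 - p + 1) = 2 * 2 ^ (1 - p) := by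
      rw [Real.rpow_add_one (by norm_num)]; ring
    have e : (1 : ℝ) + 1 = 2 := by norm_num
    rw [e, add_zero, h2, Real.one_rpow, Real.zero_rpow (by linarith)]
    have n1 : (1 - p) ≠ 0 := by linarith [hp.1]
    have n2 : (2 - p) ≠ 0 := by linarith [hp.2]
    have n3 : 1 - p + 1 = 2 - p := by ring
    rw [n3]
    field_simp
    ring
  have hint := ((i1.sub i2).div_const (1 - p)).const_mul ((2 * √2) ^ p)
  rw [← hI, intervalIntegral.integral_of_le zero_le_one,
    ofReal_integral_eq_lintegral_ofReal
      ((intervalIntegrable_iff_integrableOn_Ioc_of_le zero_le_one).1 hint)]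
  refine (ae_restrict_iff' measurableSet_Ioc).2 (Eventually.of_forall fun b hb => ?_)
  have : (1 + b) ^ (1 - p) ≤ b ^ (1 - p) :=
    Real.rpow_le_rpow_of_nonpos hb.1 (by linarith) (by linarith [hp.1])
  simp only [Pi.zero_apply]
  apply mul_nonneg (by positivity)
  exact div_nonneg_of_nonpos (by linarith) (by linarith [hp.1])

theorem Eset_energyI_lt_top (p : ℝ) (hp : p ∈ Set.Ioo (1 : ℝ) 2) :
    energyI p 1 Eset ≤
      ENNReal.ofReal (9 * 2 ^ (3 * p / 2 + 1) * (2 ^ (1 - p) - 1) / ((1 - p) * (2 - p))) ∧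
    energyI p 1 Eset < ⊤ := by
  have hp0 : 0 ≤ p := by linarith [hp.1]
  have key : energyI p 1 Eset ≤
      ENNReal.ofReal (9 * 2 ^ (3 * p / 2 + 1) * (2 ^ (1 - p) - 1) / ((1 - p) * (2 - p))) := by
    have hconst : ((2 : ℝ) * √2) ^ p = 2 ^ (3 * p / 2) := by
      have : (2 : ℝ) * √2 = 2 ^ (3 / 2 : ℝ) := by
        rw [Real.sqrt_eq_rpow, show (3 / 2 : ℝ) = 1 + 1 / 2 by norm_num,
          Real.rpow_add (by norm_num), Real.rpow_one]
      rw [this, ← Real.rpow_mul (by norm_num)]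
      congr 1; ring
    calc energyI p 1 Eset
        ≤ ∫⁻ y in Eset, (3 * ∫⁻ a in Ioc (0 : ℝ) 1,
            ENNReal.ofReal (2 * √2 / (a + ‖y‖)) ^ p) ∂μH[1] := by
          unfold energyI
          refine setLIntegral_mono' Eset_meas fun y hy => ?_
          refine le_trans ?_
            (lintegral_Eset_le fun a => ENNReal.ofReal (2 * √2 / (a + ‖y‖)) ^ p)
          exact setLIntegral_mono' Eset_meas fun x hx =>
            ENNReal.rpow_le_rpow (kappaI_le hx hy) hp0
      _ ≤ 3 * ∫⁻ b in Ioc (0 : ℝ) 1, 3 * ∫⁻ a in Ioc (0 : ℝ) 1,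
            ENNReal.ofReal (2 * √2 / (a + b)) ^ p :=
          lintegral_Eset_le fun b => 3 * ∫⁻ a in Ioc (0 : ℝ) 1,
            ENNReal.ofReal (2 * √2 / (a + b)) ^ p
      _ = 3 * ∫⁻ b in Ioc (0 : ℝ) 1, 3 * ENNReal.ofReal
            ((2 * √2) ^ p * (((1 + b) ^ (1 - p) - b ^ (1 - p)) / (1 - p))) := by
          congr 1
          apply setLIntegral_congr_fun measurableSet_Ioc
          intro b hb
          simp only
          rw [inner_integral p hp b hb.1]
      _ = _ := by
          rw [lintegral_const_mul' _ _ (by norm_num), outer_integral p hp, ← mul_assoc,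
            show (3 : ℝ≥0∞) * 3 = ENNReal.ofReal 9 by norm_num,
            ← ENNReal.ofReal_mul (by norm_num), hconst, Real.rpow_add_one (by norm_num)]
          congr 1
          ring
  exact ⟨key, key.trans_lt ENNReal.ofReal_lt_top⟩

end
end

section
/- Let E = ([−1,1]×{0}) ∪ ({0}×[0,1]) ⊂ ℝ². For every p ∈ (0,2) one has I_p^1(E) < ∞. -/
open MeasureTheory Metric Set Filter
open scoped ENNReal Topology Classical

noncomputable section

lemma aux_infDist (x y z : EuclideanSpace ℝ (Fin 2)) (hxy : x ≠ y) :
    Metric.infDist z (lineThrough x y) * ‖x - y‖ ≤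
      |(y 0 - x 0) * (z 1 - x 1) - (y 1 - x 1) * (z 0 - x 0)| := by
  set N : ℝ := (y 0 - x 0) ^ 2 + (y 1 - x 1) ^ 2 with hN
  have hnorm : ‖x - y‖ ^ 2 = N := by
    rw [EuclideanSpace.real_norm_sq_eq]; simp [Fin.sum_univ_two, hN]; ring
  have hNpos : 0 < N := by
    rw [← hnorm]; have := norm_pos_iff.2 (sub_ne_zero.2 hxy); positivity
  set t : ℝ := ((z 0 - x 0) * (y 0 - x 0) + (z 1 - x 1) * (y 1 - x 1)) / N with ht
  have ht' : t * N = (z 0 - x 0) * (y 0 - x 0) + (z 1 - x 1) * (y 1 - x 1) := by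
    rw [ht]; field_simp
  have h1 : Metric.infDist z (lineThrough x y) ≤ dist z (x + t • (y - x)) :=
    Metric.infDist_le_dist_of_mem ⟨t, rfl⟩
  have h2 : dist z (x + t • (y - x)) ^ 2 =
      (z 0 - x 0 - t * (y 0 - x 0)) ^ 2 + (z 1 - x 1 - t * (y 1 - x 1)) ^ 2 := by
    rw [dist_eq_norm, EuclideanSpace.real_norm_sq_eq]; simp [Fin.sum_univ_two]; ring
  refine le_trans (mul_le_mul_of_nonneg_right h1 (norm_nonneg _)) ?_
  apply abs_le_of_sq_le_sq' _ (abs_nonneg _) |>.2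
  rw [mul_pow, h2, hnorm, sq_abs]
  apply le_of_eq
  have : ((z 0 - x 0 - t * (y 0 - x 0)) ^ 2 + (z 1 - x 1 - t * (y 1 - x 1)) ^ 2) * N =
    ((z 0 - x 0)^2 + (z 1 - x 1)^2) * N
      - 2 * (t * N) * ((z 0 - x 0) * (y 0 - x 0) + (z 1 - x 1) * (y 1 - x 1)) + (t * N)^2 := by
    rw [hN]; ring
  rw [this, ht', hN]; ring

lemma aux_poly (x y z : EuclideanSpace ℝ (Fin 2)) (hx : x ∈ Eset) (hy : y ∈ Eset) (hz : z ∈ Eset) :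
    ((y 0 - x 0) * (z 1 - x 1) - (y 1 - x 1) * (z 0 - x 0)) ^ 2 * (‖x‖ * ‖y‖) ≤
      (‖x - y‖ * (‖x - z‖ * ‖y - z‖)) ^ 2 := by
  have n1 : ∀ v : EuclideanSpace ℝ (Fin 2), v 1 = 0 → ‖v‖ = |v 0| := by
    intro v hv; rw [EuclideanSpace.norm_eq]; simp [Fin.sum_univ_two, hv, Real.sqrt_sq_eq_abs]
  have n0 : ∀ v : EuclideanSpace ℝ (Fin 2), v 0 = 0 → ‖v‖ = |v 1| := by
    intro v hv; rw [EuclideanSpace.norm_eq]; simp [Fin.sum_univ_two, hv, Real.sqrt_sq_eq_abs]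
  have key : ∀ a b c : ℝ, |a| * |b| * c ^ 2 ≤ (a ^ 2 + c ^ 2) * (b ^ 2 + c ^ 2) := by
    intro a b c
    have := sq_nonneg (|a| - |b|)
    have h3 : |a| * |b| ≤ a ^ 2 + b ^ 2 := by
      nlinarith [sq_abs a, sq_abs b, sq_nonneg (|a| + |b|), sq_nonneg a, sq_nonneg b]
    nlinarith [mul_le_mul_of_nonneg_right h3 (sq_nonneg c), sq_nonneg (a*b), sq_nonneg (c^2)]
  have key2 : ∀ a b c : ℝ, |a| * |b| * b ^ 2 ≤ (a ^ 2 + b ^ 2) * (b ^ 2 + c ^ 2) := by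
    intro a b c
    have := sq_nonneg (|a| - |b|)
    have h3 : |a| * |b| ≤ a ^ 2 + b ^ 2 := by
      nlinarith [sq_abs a, sq_abs b, sq_nonneg (|a| + |b|), sq_nonneg a, sq_nonneg b]
    have : 0 ≤ (a ^ 2 + b ^ 2) * c ^ 2 := by positivity
    nlinarith [mul_le_mul_of_nonneg_right h3 (sq_nonneg b)]
  rw [mul_pow, mul_pow]
  simp only [EuclideanSpace.real_norm_sq_eq, Fin.sum_univ_two, PiLp.sub_apply]
  rcases hx with ⟨hx, -⟩ | ⟨hx, -⟩ <;> rcases hy with ⟨hy, -⟩ | ⟨hy, -⟩ <;>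
    rcases hz with ⟨hz, -⟩ | ⟨hz, -⟩ <;> simp only [n1, n0, hx, hy, hz]
  · exact le_trans (le_of_eq (by ring : _ = (0 : ℝ))) (by positivity)
  · nlinarith [mul_le_mul_of_nonneg_left (key (x 0) (y 0) (z 1)) (sq_nonneg (x 0 - y 0))]
  · nlinarith [mul_le_mul_of_nonneg_left (key2 (x 0) (y 1) (z 0)) (sq_nonneg (x 0 - z 0))]
  · nlinarith [mul_le_mul_of_nonneg_left (key2 (y 1) (x 0) (z 1)) (sq_nonneg (y 1 - z 1))]
  · nlinarith [mul_le_mul_of_nonneg_left (key2 (y 0) (x 1) (z 0)) (sq_nonneg (y 0 - z 0))]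
  · nlinarith [mul_le_mul_of_nonneg_left (key2 (x 1) (y 0) (z 1)) (sq_nonneg (x 1 - z 1))]
  · nlinarith [mul_le_mul_of_nonneg_left (key (x 1) (y 1) (z 0)) (sq_nonneg (x 1 - y 1))]
  · exact le_trans (le_of_eq (by ring : _ = (0 : ℝ))) (by positivity)

lemma aux_kappa (x y z : EuclideanSpace ℝ (Fin 2)) (hx : x ∈ Eset) (hy : y ∈ Eset) (hz : z ∈ Eset) :
    kappa x y z ≤ 2 * (‖x‖ₑ ^ (-(1/2) : ℝ) * ‖y‖ₑ ^ (-(1/2) : ℝ)) := by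
  have ne0 : ∀ v : EuclideanSpace ℝ (Fin 2), ‖v‖ₑ ^ (-(1/2) : ℝ) ≠ 0 := by
    intro v; simp [ENNReal.rpow_eq_zero_iff]
  by_cases hx0 : x = 0
  · subst hx0
    rw [enorm_zero, ENNReal.zero_rpow_of_neg (by norm_num), ENNReal.top_mul (ne0 y),
      ENNReal.mul_top (by norm_num)]
    exact le_top
  by_cases hy0 : y = 0
  · subst hy0
    rw [enorm_zero, ENNReal.zero_rpow_of_neg (by norm_num), ENNReal.mul_top (ne0 x),
      ENNReal.mul_top (by norm_num)]
    exact le_top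
  unfold kappa
  split_ifs with h
  swap
  · exact zero_le
  obtain ⟨hxy, hyz, hxz⟩ := h
  have px := norm_pos_iff.2 hx0
  have py := norm_pos_iff.2 hy0
  have pxy := norm_pos_iff.2 (sub_ne_zero.2 hxy)
  have pyz := norm_pos_iff.2 (sub_ne_zero.2 hyz)
  have pxz := norm_pos_iff.2 (sub_ne_zero.2 hxz)
  have hr : (2 : ℝ≥0∞) * (‖x‖ₑ ^ (-(1/2) : ℝ) * ‖y‖ₑ ^ (-(1/2) : ℝ)) =
      ENNReal.ofReal (2 * (‖x‖ ^ (-(1/2) : ℝ) * ‖y‖ ^ (-(1/2) : ℝ))) := by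
    rw [ENNReal.ofReal_mul (by norm_num), ENNReal.ofReal_mul (by positivity),
      ← ENNReal.ofReal_rpow_of_pos px, ← ENNReal.ofReal_rpow_of_pos py, ofReal_norm, ofReal_norm]
    simp
  rw [hr]
  apply ENNReal.ofReal_le_ofReal
  rw [mul_div_assoc]
  apply mul_le_mul_of_nonneg_left _ (by norm_num)
  rw [Real.rpow_neg px.le, Real.rpow_neg py.le, ← Real.sqrt_eq_rpow, ← Real.sqrt_eq_rpow,
    ← mul_inv, div_le_iff₀ (by positivity), inv_mul_eq_div, le_div_iff₀ (by positivity)]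
  have h1 := aux_infDist x y z hxy
  have h2 := aux_poly x y z hx hy hz
  set D := |(y 0 - x 0) * (z 1 - x 1) - (y 1 - x 1) * (z 0 - x 0)| with hD
  rw [← sq_abs, ← hD] at h2
  have h3 : D * (√‖x‖ * √‖y‖) ≤ ‖x - y‖ * (‖x - z‖ * ‖y - z‖) := by
    apply abs_le_of_sq_le_sq' _ (by positivity) |>.2
    rw [mul_pow D, mul_pow (√‖x‖), Real.sq_sqrt px.le, Real.sq_sqrt py.le]
    exact h2
  have h4 := mul_le_mul_of_nonneg_right h1 (show 0 ≤ √‖x‖ * √‖y‖ by positivity)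
  have h5 := h4.trans h3
  refine le_of_mul_le_mul_left ?_ pxy
  linarith

lemma aux_real (q : ℝ) (hq : q < 1) :
    ∫⁻ t in Set.Icc (-1 : ℝ) 1, ‖t‖ₑ ^ (-q) < ⊤ := by
  have h0 : IntegrableOn (fun t : ℝ => t ^ (-q)) (Set.Ioc 0 1) volume :=
    (intervalIntegrable_iff_integrableOn_Ioc_of_le zero_le_one).1
      (intervalIntegral.intervalIntegrable_rpow' (by linarith))
  have h1 : ∫⁻ t in Set.Ioc (0 : ℝ) 1, ‖t‖ₑ ^ (-q) < ⊤ := by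
    have := h0.2
    unfold HasFiniteIntegral at this
    refine lt_of_eq_of_lt (setLIntegral_congr_fun measurableSet_Ioc ?_) this
    intro t ht
    have ht0 : 0 < t := ht.1
    simp only
    rw [Real.enorm_eq_ofReal ht0.le, Real.enorm_eq_ofReal (by positivity),
      ENNReal.ofReal_rpow_of_pos ht0]
  have h2 : ∫⁻ t in Set.Ico (-1 : ℝ) 0, ‖t‖ₑ ^ (-q) < ⊤ := by
    have := (Measure.measurePreserving_neg (volume : Measure ℝ)).setLIntegral_comp_preimage_emb
      (Homeomorph.neg ℝ).measurableEmbedding (fun t => ‖t‖ₑ ^ (-q)) (Set.Ioc (0:ℝ) 1)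
    simp only [enorm_neg] at this
    rw [← this] at h1
    convert h1 using 3
    ext t; simp [and_comm]
  have h3 : Set.Icc (-1:ℝ) 1 ⊆ (Set.Ico (-1 : ℝ) 0 ∪ Set.Ioc (0 : ℝ) 1) ∪ {0} := by
    intro t ht
    rcases lt_trichotomy t 0 with h | h | h
    · exact Or.inl (Or.inl ⟨ht.1, h⟩)
    · exact Or.inr h
    · exact Or.inl (Or.inr ⟨h, ht.2⟩)
  refine lt_of_le_of_lt (lintegral_mono_set h3) ?_
  refine lt_of_le_of_lt (lintegral_union_le _ _ _) (ENNReal.add_lt_top.2 ⟨?_, ?_⟩)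
  · exact lt_of_le_of_lt (lintegral_union_le _ _ _) (ENNReal.add_lt_top.2 ⟨h2, h1⟩)
  · simp

lemma aux_seg (q : ℝ) (hq : q < 1) (f : ℝ → EuclideanSpace ℝ (Fin 2)) (hf : Isometry f)
    (hn : ∀ t, ‖f t‖ₑ = ‖t‖ₑ) :
    ∫⁻ x in f '' Set.Icc (-1 : ℝ) 1, ‖x‖ₑ ^ (-q) ∂ μH[1] < ⊤ := by
  have he : MeasurableEmbedding f := hf.isClosedEmbedding.measurableEmbedding
  have h1 : (μH[1] : Measure (EuclideanSpace ℝ (Fin 2))).restrict (f '' Set.Icc (-1 : ℝ) 1) =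
      (Measure.map f μH[1]).restrict (f '' Set.Icc (-1 : ℝ) 1) := by
    rw [hf.map_hausdorffMeasure (Or.inl zero_le_one),
      Measure.restrict_restrict_of_subset (Set.image_subset_range _ _)]
  rw [h1, he.restrict_map, Set.preimage_image_eq _ hf.injective, he.lintegral_map,
    hausdorffMeasure_real]
  simp only [hn]
  exact aux_real q hq

lemma aux_E (q : ℝ) (hq : q < 1) :
    ∫⁻ x in Eset, ‖x‖ₑ ^ (-q) ∂ μH[1] < ⊤ := by
  have hs : Eset ⊆ (fun t : ℝ => EuclideanSpace.single (0 : Fin 2) t) '' Set.Icc (-1 : ℝ) 1 ∪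
      (fun t : ℝ => EuclideanSpace.single (1 : Fin 2) t) '' Set.Icc (-1 : ℝ) 1 := by
    rintro v (⟨h, h'⟩ | ⟨h, h'⟩)
    · refine Or.inl ⟨v 0, h', ?_⟩
      ext i; fin_cases i <;> simp [h]
    · refine Or.inr ⟨v 1, ⟨by linarith [h'.1], h'.2⟩, ?_⟩
      ext i; fin_cases i <;> simp [h]
  refine lt_of_le_of_lt (lintegral_mono_set hs) ?_
  refine lt_of_le_of_lt (lintegral_union_le _ _ _) (ENNReal.add_lt_top.2 ⟨?_, ?_⟩)
  · exact aux_seg q hq _ (Isometry.of_dist_eq fun a b => by simp) (fun t => by simp [enorm_eq_nnnorm])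
  · exact aux_seg q hq _ (Isometry.of_dist_eq fun a b => by simp) (fun t => by simp [enorm_eq_nnnorm])

theorem Eset_energyI_lt_top_all (p : ℝ) (hp : p ∈ Set.Ioo (0 : ℝ) 2) :
    energyI p 1 Eset < ⊤ := by
  obtain ⟨hp0, hp2⟩ := hp
  have hE := aux_E (p / 2) (by linarith)
  have hm : Measurable (fun x : EuclideanSpace ℝ (Fin 2) => ‖x‖ₑ ^ (-(p/2))) :=
    measurable_enorm.pow_const _
  have hb : ∀ x ∈ Eset, ∀ y ∈ Eset,
      kappaI Eset x y ^ p ≤ 2 ^ p * (‖x‖ₑ ^ (-(p/2)) * ‖y‖ₑ ^ (-(p/2))) := by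
    intro x hx y hy
    have h1 : kappaI Eset x y ≤ 2 * (‖x‖ₑ ^ (-(1/2) : ℝ) * ‖y‖ₑ ^ (-(1/2) : ℝ)) :=
      iSup₂_le fun z hz => aux_kappa x y z hx hy hz
    refine (ENNReal.rpow_le_rpow h1 hp0.le).trans (le_of_eq ?_)
    rw [ENNReal.mul_rpow_of_nonneg _ _ hp0.le, ENNReal.mul_rpow_of_nonneg _ _ hp0.le,
      ← ENNReal.rpow_mul, ← ENNReal.rpow_mul]
    have : -(1/2) * p = -(p/2) := by ring
    rw [this]
  have hin : ∀ y ∈ Eset, ∫⁻ x in Eset, kappaI Eset x y ^ p ∂ μH[1] ≤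
      2 ^ p * ((∫⁻ x in Eset, ‖x‖ₑ ^ (-(p/2)) ∂ μH[1]) * ‖y‖ₑ ^ (-(p/2))) := by
    intro y hy
    rw [← lintegral_mul_const _ hm, ← lintegral_const_mul _ (hm.mul_const _)]
    exact setLIntegral_mono ((hm.mul_const _).const_mul _) fun x hx => hb x hx y hy
  unfold energyI
  refine lt_of_le_of_lt (setLIntegral_mono ((hm.const_mul _).const_mul _) hin) ?_
  rw [lintegral_const_mul _ (hm.const_mul _), lintegral_const_mul _ hm]
  exact ENNReal.mul_lt_top (ENNReal.rpow_lt_top_of_nonneg hp0.le (by simp))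
    (ENNReal.mul_lt_top hE hE)

end
end

section
/- Let a_n = 2^{−nⁿ·n³} and F = (⋃_{n∈ℕ} [a_{2n}/2, a_{2n}]×{0}) ∪ (⋃_{n∈ℕ} {0}×[a_{2n−1}/2, a_{2n−1}]) ⊂ ℝ². Then F has a weak approximate 1-tangent at the origin, but F has no approximate 1-tangent at the origin. -/
open MeasureTheory Metric Set Filter
open scoped ENNReal Topology Classical

noncomputable section

/-- `a_n = 2 ^ (-(n^n * n^3))`. -/
def aseq (n : ℕ) : ℝ := ((2 : ℝ) ^ (n ^ n * n ^ 3))⁻¹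

/-- The set `F = (⋃_{n ≥ 1} [a_{2n}/2, a_{2n}] × {0}) ∪ (⋃_{n ≥ 1} {0} × [a_{2n-1}/2, a_{2n-1}])`. -/
def Fset : Set (EuclideanSpace ℝ (Fin 2)) :=
  {p | ∃ n : ℕ, 1 ≤ n ∧ p 1 = 0 ∧ p 0 ∈ Set.Icc (aseq (2 * n) / 2) (aseq (2 * n))} ∪
  {p | ∃ n : ℕ, 1 ≤ n ∧ p 0 = 0 ∧ p 1 ∈ Set.Icc (aseq (2 * n - 1) / 2) (aseq (2 * n - 1))}

/-- The axis on which the `m`-th segment lies. -/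
def axIdx (m : ℕ) : Fin 2 := if Even m then 0 else 1

lemma aseq_pos (n : ℕ) : 0 < aseq n := by unfold aseq; positivity

lemma exp_step (n : ℕ) : n ^ n * n ^ 3 + n ≤ (n + 1) ^ (n + 1) * (n + 1) ^ 3 := by
  rcases Nat.eq_zero_or_pos n with rfl | hn
  · norm_num
  have h1 : n ^ n * n ^ 3 ≤ (n + 1) ^ n * (n + 1) ^ 3 := by gcongr <;> omega
  have h2 : 1 ≤ n ^ n * n ^ 3 := Nat.succ_le_of_lt (by positivity)
  have h3 : (n + 1) ^ (n + 1) * (n + 1) ^ 3 = (n + 1) * ((n + 1) ^ n * (n + 1) ^ 3) := by ring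
  rw [h3]
  nlinarith

lemma aseq_succ_le (n : ℕ) : aseq (n + 1) ≤ (1 / 2) ^ n * aseq n := by
  unfold aseq
  rw [one_div, inv_pow, ← mul_inv, ← pow_add 2 n (n ^ n * n ^ 3)]
  apply inv_anti₀ (by positivity)
  apply pow_le_pow_right₀ (by norm_num)
  have := exp_step n
  omega

lemma aseq_anti : Antitone aseq := by
  apply antitone_nat_of_succ_le
  intro n
  refine (aseq_succ_le n).trans ?_
  have := aseq_pos n
  have h : ((1 : ℝ) / 2) ^ n ≤ 1 := pow_le_one₀ (by norm_num) (by norm_num)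
  nlinarith

lemma aseq_tendsto : Tendsto aseq atTop (𝓝 0) := by
  rw [← tendsto_add_atTop_iff_nat 1]
  have h := tendsto_pow_atTop_nhds_zero_of_lt_one (r := (1 / 2 : ℝ)) (by norm_num) (by norm_num)
  refine squeeze_zero (fun n => (aseq_pos _).le) (fun n => ?_) h
  refine (aseq_succ_le n).trans ?_
  have h0 : aseq n ≤ aseq 0 := aseq_anti (Nat.zero_le n)
  have h1 : aseq 0 = 1 := by simp [aseq]
  have : (0 : ℝ) < (1 / 2) ^ n := by positivity
  nlinarith

lemma mem_Fset (p : EuclideanSpace ℝ (Fin 2)) :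
    p ∈ Fset ↔ ∃ m : ℕ, 1 ≤ m ∧ ∃ t ∈ Set.Icc (aseq m / 2) (aseq m),
      p = EuclideanSpace.single (axIdx m) t := by
  constructor
  · rintro (⟨n, hn, h0, h1⟩ | ⟨n, hn, h0, h1⟩)
    · refine ⟨2 * n, by omega, p 0, h1, ?_⟩
      have : axIdx (2 * n) = 0 := by simp [axIdx]
      rw [this]
      ext i
      fin_cases i <;> simp [h0]
    · refine ⟨2 * n - 1, by omega, p 1, h1, ?_⟩
      have : axIdx (2 * n - 1) = 1 := by
        have : ¬ Even (2 * n - 1) := by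
          rw [Nat.not_even_iff_odd]; exact ⟨n - 1, by omega⟩
        simp [axIdx, this]
      rw [this]
      ext i
      fin_cases i <;> simp [h0]
  · rintro ⟨m, hm, t, ht, rfl⟩
    by_cases h : Even m
    · left
      obtain ⟨k, rfl⟩ := h
      have e : 2 * k = k + k := by ring
      refine ⟨k, by omega, ?_, ?_⟩
      · simp [axIdx]
      · rw [e]; simpa [axIdx] using ht
    · right
      have h' := h
      rw [Nat.not_even_iff_odd] at h
      obtain ⟨k, rfl⟩ := h
      have e : 2 * (k + 1) - 1 = 2 * k + 1 := by omega
      refine ⟨k + 1, by omega, ?_, ?_⟩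
      · simp [axIdx]
      · rw [e]; simpa [axIdx] using ht

lemma hausdorff_single (i : Fin 2) (S : Set ℝ) :
    μH[1] ((fun t : ℝ => (EuclideanSpace.single i t : EuclideanSpace ℝ (Fin 2))) '' S)
      = volume S := by
  have hi : Isometry (fun t : ℝ => (EuclideanSpace.single i t : EuclideanSpace ℝ (Fin 2))) :=
    Isometry.of_dist_eq fun x y => by simp
  rw [hi.hausdorffMeasure_image (Or.inl zero_le_one), MeasureTheory.hausdorffMeasure_real]

lemma single_eq_smul (i : Fin 2) (t : ℝ) :
    (EuclideanSpace.single i t : EuclideanSpace ℝ (Fin 2)) = t • EuclideanSpace.single i 1 := by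
  ext j
  simp

/-- The direction chosen at scale `r`. -/
def sdir (r : ℝ) : EuclideanSpace ℝ (Fin 2) :=
  if h : ∃ n, aseq n / 2 ≤ r then EuclideanSpace.single (axIdx (Nat.find h)) 1
  else EuclideanSpace.single 0 1

lemma key_bound (N : ℕ) (r ε : ℝ) (hr : 0 < r) (hN : r < aseq N / 2) (hε : 0 < ε) :
    μH[1] ((Fset \ cone (sdir r) ε 0) ∩ Metric.closedBall 0 r) / ENNReal.ofReal (2 * r) ^ (1 : ℝ)
      ≤ ENNReal.ofReal ((1 / 2) ^ N) := by
  have h : ∃ n, aseq n / 2 ≤ r := by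
    have := aseq_tendsto.eventually (gt_mem_nhds hr)
    obtain ⟨n, hn⟩ := this.exists
    exact ⟨n, by have := aseq_pos n; linarith⟩
  have hs : sdir r = EuclideanSpace.single (axIdx (Nat.find h)) 1 := by simp [sdir, h]
  set n := Nat.find h with hn
  have hn1 : aseq n / 2 ≤ r := Nat.find_spec h
  have hmin : ∀ m, aseq m / 2 ≤ r → n ≤ m := fun m hm => Nat.find_min' h hm
  have hNn : N ≤ n := by
    by_contra hlt
    push Not at hlt
    have := aseq_anti hlt.le
    linarith
  rw [hs, ENNReal.rpow_one]
  obtain ⟨i, hi⟩ : ∃ i : Fin 2, ∀ j : Fin 2, j ≠ axIdx n → j = i := by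
    generalize axIdx n = k
    exact ⟨1 - k, by revert k; decide⟩
  have hsub : (Fset \ cone (EuclideanSpace.single (axIdx n) 1) ε 0) ∩ Metric.closedBall 0 r ⊆
      (fun t : ℝ => (EuclideanSpace.single i t : EuclideanSpace ℝ (Fin 2))) ''
        Set.Icc 0 (aseq (n + 1)) := by
    rintro p ⟨⟨hpF, hpc⟩, hpb⟩
    obtain ⟨m, hm, t, ht, rfl⟩ := (mem_Fset p).1 hpF
    have ht0 : 0 < t := lt_of_lt_of_le (by have := aseq_pos m; linarith) ht.1
    have htr : t ≤ r := by
      simpa [abs_of_pos ht0] using hpb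
    have hnm : n ≤ m := hmin m (ht.1.trans htr)
    have hax : axIdx m ≠ axIdx n := by
      intro he
      apply hpc
      rw [he]
      refine ⟨by simpa using ht0.ne', ?_⟩
      apply lt_of_le_of_lt (min_le_left _ _)
      rw [sub_zero, single_eq_smul, InnerProductGeometry.angle_smul_left_of_pos _ _ ht0,
        InnerProductGeometry.angle_self (by simp)]
      exact hε
    have hne : n ≠ m := fun he => hax (by rw [he])
    refine ⟨t, ⟨ht0.le, ht.2.trans (aseq_anti (by omega))⟩, ?_⟩
    simp only [hi _ hax]
  have hμ := (measure_mono (μ := μH[1]) hsub)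
  rw [hausdorff_single, Real.volume_Icc, sub_zero] at hμ
  refine (ENNReal.div_le_div_right hμ _).trans ?_
  rw [← ENNReal.ofReal_div_of_pos (by linarith)]
  apply ENNReal.ofReal_le_ofReal
  rw [div_le_iff₀ (by linarith)]
  have h1 := aseq_succ_le n
  have h2 : ((1 : ℝ) / 2) ^ n ≤ (1 / 2) ^ N :=
    pow_le_pow_of_le_one (by norm_num) (by norm_num) hNn
  have h3 : aseq n ≤ 2 * r := by linarith
  exact h1.trans (mul_le_mul h2 h3 (aseq_pos n).le (by positivity))

lemma weak_part : HasWeakApproxTangent 1 Fset 0 := by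
  refine ⟨1, one_pos, sdir, ?_, ?_⟩
  · intro r _
    unfold sdir
    split_ifs <;> simp
  · intro ε hε
    rw [ENNReal.tendsto_nhds_zero]
    intro δ hδ
    have hl : Tendsto (fun N : ℕ => ENNReal.ofReal ((1 / 2 : ℝ) ^ N)) atTop (𝓝 0) := by
      have := ENNReal.tendsto_ofReal (tendsto_pow_atTop_nhds_zero_of_lt_one
        (r := (1 / 2 : ℝ)) (by norm_num) (by norm_num))
      simpa using this
    obtain ⟨N, hN⟩ := (hl.eventually (gt_mem_nhds hδ)).exists
    have hp : 0 < aseq N / 2 := by have := aseq_pos N; linarith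
    filter_upwards [Ioo_mem_nhdsGT hp] with r hr
    exact (key_bound N r ε hr.1 hr.2 hε).trans hN.le

lemma exists_axis (s : EuclideanSpace ℝ (Fin 2)) (hs : ‖s‖ = 1) :
    ∃ j : Fin 2, 0 < min (InnerProductGeometry.angle (EuclideanSpace.single j (1 : ℝ)) s)
      (InnerProductGeometry.angle (EuclideanSpace.single j (1 : ℝ)) (-s)) := by
  by_contra hcon
  push Not at hcon
  have key : ∀ j k : Fin 2, k ≠ j → s k = 0 := by
    intro j k hkj
    rcases min_le_iff.1 (hcon j) with h | h
    · have h0 := le_antisymm h (InnerProductGeometry.angle_nonneg _ _)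
      obtain ⟨_, c, _, hc⟩ := InnerProductGeometry.angle_eq_zero_iff.1 h0
      rw [hc]; simp [hkj]
    · have h0 := le_antisymm h (InnerProductGeometry.angle_nonneg _ _)
      obtain ⟨_, c, _, hc⟩ := InnerProductGeometry.angle_eq_zero_iff.1 h0
      rw [← neg_neg s, hc]; simp [hkj]
  have : s = 0 := by
    ext k
    fin_cases k
    · exact key 1 0 (by decide)
    · exact key 0 1 (by decide)
  rw [this] at hs
  simp at hs

lemma strong_part : ¬ HasApproxTangent 1 Fset 0 := by
  rintro ⟨s, hs, H⟩
  obtain ⟨j, hj⟩ := exists_axis s hs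
  set ε := min (InnerProductGeometry.angle (EuclideanSpace.single j (1 : ℝ)) s)
      (InnerProductGeometry.angle (EuclideanSpace.single j (1 : ℝ)) (-s)) with hεdef
  have H1 := H ε hj
  obtain ⟨φ, hφ, hax, hφ1⟩ : ∃ φ : ℕ → ℕ, Tendsto φ atTop atTop ∧ (∀ k, axIdx (φ k) = j) ∧
      ∀ k, 1 ≤ φ k := by
    fin_cases j
    · refine ⟨fun k => 2 * k + 2, ?_, ?_, fun k => by simp⟩
      · exact tendsto_atTop_mono (fun k => by simp only [id]; omega) tendsto_id
      · intro k
        have : Even (2 * k + 2) := ⟨k + 1, by ring⟩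
        simp [axIdx, this]
    · refine ⟨fun k => 2 * k + 1, ?_, ?_, fun k => by simp⟩
      · exact tendsto_atTop_mono (fun k => by simp only [id]; omega) tendsto_id
      · intro k
        simp [axIdx]
  have hseq : Tendsto (fun k => aseq (φ k)) atTop (𝓝[>] 0) :=
    tendsto_nhdsWithin_iff.2 ⟨aseq_tendsto.comp hφ, Eventually.of_forall fun k => aseq_pos _⟩
  have H2 := (H1.comp hseq).eventually
    (gt_mem_nhds (show (0 : ℝ≥0∞) < ENNReal.ofReal (1 / 4) by simp))
  obtain ⟨k, hk⟩ := H2.exists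
  refine absurd hk (not_lt.2 ?_)
  set m := φ k with hm
  have hpos := aseq_pos m
  have hsub : (fun t : ℝ => (EuclideanSpace.single j t : EuclideanSpace ℝ (Fin 2))) ''
        Set.Icc (aseq m / 2) (aseq m) ⊆
      (Fset \ cone s ε 0) ∩ Metric.closedBall 0 (aseq m) := by
    rintro _ ⟨t, ht, rfl⟩
    have ht0 : 0 < t := lt_of_lt_of_le (by linarith) ht.1
    refine ⟨⟨(mem_Fset _).2 ⟨m, hφ1 k, t, ht, by simp only [hm, hax]⟩, ?_⟩, ?_⟩
    · rintro ⟨_, hlt⟩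
      simp only [sub_zero] at hlt
      rw [single_eq_smul, InnerProductGeometry.angle_smul_left_of_pos _ _ ht0,
        InnerProductGeometry.angle_smul_left_of_pos _ _ ht0] at hlt
      exact lt_irrefl _ hlt
    · simpa [abs_of_pos ht0] using ht.2
  have hμ := (measure_mono (μ := μH[1]) hsub)
  rw [hausdorff_single, Real.volume_Icc] at hμ
  simp only [Function.comp_apply, ENNReal.rpow_one]
  refine le_trans ?_ (ENNReal.div_le_div_right hμ _)
  rw [← ENNReal.ofReal_div_of_pos (by linarith)]
  apply ENNReal.ofReal_le_ofReal
  rw [le_div_iff₀ (by linarith)]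
  linarith

theorem Fset_weak_but_not_strong_approx_tangent :
    HasWeakApproxTangent 1 Fset 0 ∧ ¬ HasApproxTangent 1 Fset 0 := by
  exact ⟨weak_part, strong_part⟩

end
end
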